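/- arXiv:2508.03671 — 2 statements merged into one kernel-verified Lean document; each statement's English description precedes it below -/
import Mathlib

section
/- For every R > 0, every x' ∈ (−R, R), and every continuous function φ : [−R, R] → ℝ, one has lim_{t → 0⁺} ∫_{−R}^{R} f₁(x, t; x') · φ(x) dx = φ(x'); i.e., f₁(·, t; x') converges weakly to the Dirac delta at x' as t → 0⁺, so f₁ satisfies the initial condition of the forward Kolmogorov problem. -/
open Real Filter Topology MeasureTheory

/-- Dirichlet heat kernel of the interval `(-R, R)` with source `x'`. -/
noncomputable def f₁ (R x' x t : ℝ) : ℝ :=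
  ∑' k : ℕ, (1 / R) * Real.sin (((k : ℝ) + 1) * π * (x' + R) / (2 * R)) *
    Real.sin (((k : ℝ) + 1) * π * (x + R) / (2 * R)) *
    Real.exp (-((((k : ℝ) + 1) * π) ^ 2 / (4 * R ^ 2)) * t / 2)

/-!
By the product-to-sum formula, `f₁` is the method-of-images kernel: on the circle of length `4R` it
is the heat kernel centred at `x'` minus the heat kernel centred at the mirror image of `x'` across
an endpoint. The circle heat kernel is Jacobi's theta function, an approximate identity as time
tends to `0`: its Fourier series shows that it has mass one, and the theta functional equation
turns it into a sum of Gaussians, which is nonnegative and decays uniformly away from the centre.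
Hence the first term recovers `φ x'`, while the mirror image lies outside `[-R, R]` and contributes
nothing in the limit.
-/

section PeriodicLift

variable {T a : ℝ} [Fact (0 < T)]

lemma continuousAt_liftIoc {B : Type*} [TopologicalSpace B] {f : ℝ → B} {x : ℝ}
    (hx : x ∈ Set.Ioo a (a + T)) (hf : ContinuousAt f x) :
    ContinuousAt (AddCircle.liftIoc T a f) x := by
  have hxa : (x : AddCircle T) ≠ a := fun h ↦ by
    rw [AddCircle.coe_eq_coe_iff_of_mem_Ico (Set.Ioo_subset_Ico_self hx)
      (by simpa using (Fact.out : 0 < T))] at h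
    exact hx.1.ne' h
  refine ContinuousAt.comp (f := fun y ↦ (AddCircle.equivIoc T a y : ℝ)) (g := f) ?_
    (continuous_subtype_val.continuousAt.comp (AddCircle.continuousAt_equivIoc T a hxa))
  rwa [AddCircle.equivIoc_coe_of_mem (Set.Ioo_subset_Ioc_self hx)]

lemma integrable_liftIoc {E : Type*} [NormedAddCommGroup E] {f : ℝ → E}
    (hf : IntegrableOn f (Set.Ioc a (a + T))) : Integrable (AddCircle.liftIoc T a f) :=
  ((measurePreserving_subtype_coe measurableSet_Ioc).comp
    (AddCircle.measurePreserving_equivIoc T)).integrable_comp_of_integrable hf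

end PeriodicLift

lemma integral_fourier (T : ℝ) [hT : Fact (0 < T)] (n : ℤ) :
    ∫ x : AddCircle T, fourier n x = if n = 0 then (T : ℂ) else 0 := by
  split_ifs with hn
  · simp [hn, Measure.real, hT.out.le]
  · exact integral_eq_zero_of_add_right_eq_neg (fourier_add_half_inv_index hn hT.out)

lemma norm_fourier_mul {T : ℝ} (n : ℤ) (a : AddCircle T) (z : ℂ) : ‖fourier n a * z‖ = ‖z‖ := by
  rw [norm_mul, fourier_apply, Circle.norm_coe, one_mul]

section ThetaKernel

open HurwitzZeta HurwitzKernelBounds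

lemma cosKernel_functional_equation (a : UnitAddCircle) {t : ℝ} (ht : 0 < t) :
    cosKernel a t = t⁻¹ ^ (1 / 2 : ℝ) * evenKernel a t⁻¹ := by
  have ht' : t⁻¹ ^ (1 / 2 : ℝ) ≠ 0 := (rpow_pos_of_pos (inv_pos.2 ht) _).ne'
  rw [evenKernel_functional_equation, one_div t⁻¹, inv_inv, ← mul_assoc, mul_one_div_cancel ht',
    one_mul]

lemma cosKernel_nonneg (a : UnitAddCircle) {t : ℝ} (ht : 0 < t) : 0 ≤ cosKernel a t := by
  induction a using QuotientAddGroup.induction_on with | H x => ?_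
  have hx := (hasSum_int_evenKernel x (inv_pos.2 ht)).nonneg fun _ ↦ (exp_pos _).le
  rw [cosKernel_functional_equation _ ht]
  positivity

lemma evenKernel_le_of_le_norm {a : UnitAddCircle} {δ t : ℝ} (hδ : 0 ≤ δ) (ha : δ ≤ ‖a‖)
    (ht : 0 < t) :
    evenKernel a t ≤ 2 * (rexp (-π * δ ^ 2 * t) / (1 - rexp (-π * t))) := by
  obtain ⟨x, ⟨hx₀, hx₁⟩, rfl⟩ := AddCircle.eq_coe_Ico a
  have F_nat_le {b : ℝ} (hb : δ ≤ b) :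
      F_nat 0 b t ≤ rexp (-π * δ ^ 2 * t) / (1 - rexp (-π * t)) := by
    refine (le_norm_self _).trans ((F_nat_zero_le (hδ.trans hb) ht).trans ?_)
    have hden : 0 ≤ 1 - rexp (-(π * t)) := by
      simpa using (mul_pos pi_pos ht).le
    simp only [neg_mul]
    gcongr
  have hx : δ ≤ x := by
    simpa [abs_of_nonneg hx₀] using ha.trans (QuotientAddGroup.norm_mk_le_norm (m := x))
  have hx' : δ ≤ 1 - x := by
    have h := ha.trans_eq (norm_neg (x : UnitAddCircle)).symm
    rw [← AddCircle.coe_neg, ← AddCircle.coe_add_period] at h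
    have h' := h.trans QuotientAddGroup.norm_mk_le_norm
    rwa [norm_of_nonneg (by linarith), neg_add_eq_sub] at h'
  calc evenKernel x t = F_int 0 x t := by
        simp [← (hasSum_int_evenKernel x ht).tsum_eq, F_int, f_int]
    _ = F_nat 0 x t + F_nat 0 (1 - x) t := F_int_eq_of_mem_Icc 0 ⟨hx₀, hx₁.le⟩ ht
    _ ≤ _ := (add_le_add (F_nat_le hx) (F_nat_le hx')).trans_eq (two_mul _).symm

lemma tendstoUniformlyOn_cosKernel_zero {δ : ℝ} (hδ : 0 < δ) :
    TendstoUniformlyOn (fun t a ↦ cosKernel a t) 0 (𝓝[>] 0) {a | δ ≤ ‖a‖} := by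
  have hbound : Tendsto (fun u : ℝ ↦ 2 * (u ^ (1 / 2 : ℝ) * rexp (-(π * δ ^ 2) * u) *
      (1 - rexp (-π * u))⁻¹)) atTop (𝓝 0) := by
    have hexp : Tendsto (fun u ↦ rexp (-π * u)) atTop (𝓝 0) :=
      tendsto_exp_atBot.comp (tendsto_id.const_mul_atTop_of_neg (neg_neg_of_pos pi_pos))
    simpa using ((tendsto_rpow_mul_exp_neg_mul_atTop_nhds_zero (1 / 2) (π * δ ^ 2)
      (by positivity)).mul ((hexp.const_sub 1).inv₀ (by simp))).const_mul 2
  rw [Metric.tendstoUniformlyOn_iff]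
  intro ε hε
  filter_upwards [tendsto_inv_nhdsGT_zero.eventually (hbound.eventually (gt_mem_nhds hε)),
    self_mem_nhdsWithin] with t htε (ht : 0 < t) a (ha : δ ≤ ‖a‖)
  rw [Pi.zero_apply, dist_zero_left, norm_of_nonneg (cosKernel_nonneg a ht)]
  calc cosKernel a t
      = t⁻¹ ^ (1 / 2 : ℝ) * evenKernel a t⁻¹ := cosKernel_functional_equation a ht
    _ ≤ t⁻¹ ^ (1 / 2 : ℝ) * (2 * (rexp (-π * δ ^ 2 * t⁻¹) / (1 - rexp (-π * t⁻¹)))) := by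
        gcongr
        exact evenKernel_le_of_le_norm hδ.le ha (inv_pos.2 ht)
    _ = 2 * (t⁻¹ ^ (1 / 2 : ℝ) * rexp (-(π * δ ^ 2) * t⁻¹) * (1 - rexp (-π * t⁻¹))⁻¹) := by
        rw [div_eq_mul_inv, neg_mul π]
        ring
    _ < ε := htε

lemma hasSum_fourier_cosKernel (a : UnitAddCircle) {t : ℝ} (ht : 0 < t) :
    HasSum (fun n : ℤ ↦ fourier n a * rexp (-π * n ^ 2 * t)) (cosKernel a t : ℂ) := by
  induction a using QuotientAddGroup.induction_on with | H x => ?_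
  convert hasSum_int_cosKernel x ht using 3 with n
  rw [fourier_coe_apply]
  congr 1
  push_cast
  ring

lemma summable_exp_neg_pi_mul_sq {t : ℝ} (ht : 0 < t) :
    Summable fun n : ℤ ↦ rexp (-π * n ^ 2 * t) :=
  (summable_f_int 0 0 ht).congr fun n ↦ by simp [f_int]

lemma continuous_cosKernel {t : ℝ} (ht : 0 < t) :
    Continuous fun a : UnitAddCircle ↦ cosKernel a t := by
  have h : Continuous fun a : UnitAddCircle ↦ (cosKernel a t : ℂ) := by
    simp only [← (hasSum_fourier_cosKernel _ ht).tsum_eq]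
    exact continuous_tsum (fun n ↦ by fun_prop) (summable_exp_neg_pi_mul_sq ht)
      fun n a ↦ by rw [norm_fourier_mul, Complex.norm_real, norm_eq_abs, abs_exp]
  exact Complex.continuous_re.comp h

lemma integral_cosKernel {t : ℝ} (ht : 0 < t) : ∫ a : UnitAddCircle, cosKernel a t = 1 := by
  have h := hasSum_integral_of_summable_integral_norm (μ := (volume : Measure UnitAddCircle))
    (F := fun (n : ℤ) a ↦ fourier n a * (rexp (-π * n ^ 2 * t) : ℂ))
    (fun n ↦ (by fun_prop : Continuous _).integrable_of_hasCompactSupport (.of_compactSpace _))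
    (by simpa only [norm_fourier_mul, Complex.norm_real, norm_eq_abs, abs_exp, integral_const,
      Measure.real, UnitAddCircle.measure_univ, ENNReal.toReal_one, one_smul] using
      summable_exp_neg_pi_mul_sq ht)
  simp only [integral_mul_const, integral_fourier, (hasSum_fourier_cosKernel _ ht).tsum_eq,
    integral_complex_ofReal] at h
  have h' := h.unique (hasSum_single 0 fun n hn ↦ by simp [hn])
  simpa using h'

/-- The Dirichlet heat kernel of `[0, 1/2]` with source `y`, obtained by the method of images from
the heat kernel `cosKernel` of the circle `ℝ / ℤ`. The time is that of `cosKernel`, for which the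
`n`-th Fourier mode decays like `exp (-π n² t)`. -/
noncomputable def imageKernel (y x t : ℝ) : ℝ :=
  cosKernel ((x - y : ℝ) : UnitAddCircle) t - cosKernel ((x + y : ℝ) : UnitAddCircle) t

variable {E : Type*} [NormedAddCommGroup E] [NormedSpace ℝ E] [CompleteSpace E]

theorem tendsto_integral_cosKernel_sub_smul {g : UnitAddCircle → E} (hg : Integrable g)
    {b : UnitAddCircle} (hgb : ContinuousAt g b) :
    Tendsto (fun t ↦ ∫ a, cosKernel (a - b) t • g a) (𝓝[>] 0) (𝓝 (g b)) := by
  suffices Tendsto (fun t ↦ ∫ a in Set.univ, cosKernel (a - b) t • g a) (𝓝[>] 0) (𝓝 (g b)) by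
    simpa only [setIntegral_univ] using this
  refine tendsto_setIntegral_peak_smul_of_integrableOn_of_tendsto .univ .univ subset_rfl univ_mem
    (by simp) ?nonneg ?off_peak ?mass ?meas hg.integrableOn
    (by simpa using hgb.tendsto)
  case nonneg =>
    filter_upwards [self_mem_nhdsWithin] with t ht a _ using cosKernel_nonneg _ ht
  case off_peak =>
    intro u hu hbu
    obtain ⟨δ, hδ, hball⟩ := Metric.isOpen_iff.1 hu b hbu
    refine ((tendstoUniformlyOn_cosKernel_zero hδ).comp (· - b)).mono fun a ha ↦ ?_
    by_contra! h
    exact ha.2 (hball (by simpa [dist_eq_norm] using h))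
  case mass =>
    refine tendsto_const_nhds.congr' ?_
    filter_upwards [self_mem_nhdsWithin] with t ht
    rw [setIntegral_univ, integral_sub_right_eq_self (cosKernel · t), integral_cosKernel ht]
  case meas =>
    filter_upwards [self_mem_nhdsWithin] with t ht
    exact ((continuous_cosKernel ht).comp (continuous_sub_right b)).aestronglyMeasurable

theorem tendsto_intervalIntegral_cosKernel_sub_smul {a y : ℝ} (hy : y ∈ Set.Ioo a (a + 1))
    {g : ℝ → E} (hg : IntervalIntegrable g volume a (a + 1)) (hgy : ContinuousAt g y) :
    Tendsto (fun t ↦ ∫ x in a..a + 1, cosKernel ((x - y : ℝ) : UnitAddCircle) t • g x) (𝓝[>] 0)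
      (𝓝 (g y)) := by
  have hg' := (intervalIntegrable_iff_integrableOn_Ioc_of_le (by simp)).1 hg
  have h := tendsto_integral_cosKernel_sub_smul (integrable_liftIoc hg')
    (continuousAt_liftIoc hy hgy)
  rw [AddCircle.liftIoc_coe_apply (Set.Ioo_subset_Ioc_self hy)] at h
  refine h.congr fun t ↦ ?_
  rw [← UnitAddCircle.intervalIntegral_preimage a, intervalIntegral.integral_of_le (by simp),
    intervalIntegral.integral_of_le (by simp)]
  refine setIntegral_congr_fun measurableSet_Ioc fun x hx ↦ ?_
  simp only [AddCircle.liftIoc_coe_apply hx, AddCircle.coe_sub]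

theorem tendsto_intervalIntegral_cosKernel_sub_smul_of_le {a c y : ℝ}
    (hy : y ∈ Set.Ioo a (a + 1)) (hc : c ∈ Set.Icc a (a + 1)) {g : ℝ → E}
    (hg : IntervalIntegrable g volume a c)
    (hgy : ContinuousAt ((Set.Iic c).indicator g) y) :
    Tendsto (fun t ↦ ∫ x in a..c, cosKernel ((x - y : ℝ) : UnitAddCircle) t • g x) (𝓝[>] 0)
      (𝓝 ((Set.Iic c).indicator g y)) := by
  have hg' : IntervalIntegrable ((Set.Iic c).indicator g) volume a (a + 1) := by
    rw [intervalIntegrable_iff_integrableOn_Ioc_of_le (by simp), IntegrableOn,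
      integrable_indicator_iff measurableSet_Iic, IntegrableOn,
      Measure.restrict_restrict measurableSet_Iic, Set.Iic_inter_Ioc_of_le hc.2]
    exact (intervalIntegrable_iff_integrableOn_Ioc_of_le hc.1).1 hg
  refine (tendsto_intervalIntegral_cosKernel_sub_smul hy hg' hgy).congr fun t ↦ ?_
  rw [← intervalIntegral.integral_indicator hc]
  simp only [← Set.Iic_def, Set.indicator_smul]

theorem tendsto_intervalIntegral_imageKernel_smul {y : ℝ} (hy : y ∈ Set.Ioo 0 (1 / 2))
    {g : ℝ → E} (hg : IntervalIntegrable g volume 0 (1 / 2)) (hgy : ContinuousAt g y) :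
    Tendsto (fun t ↦ ∫ x in 0..1 / 2, imageKernel y x t • g x) (𝓝[>] 0) (𝓝 (g y)) := by
  obtain ⟨hy₀, hy₁⟩ := hy
  have hc : (1 / 2 : ℝ) ∈ Set.Icc 0 (0 + 1) := by norm_num
  have hnear : (Set.Iic (1 / 2)).indicator g =ᶠ[𝓝 y] g := by
    filter_upwards [Iic_mem_nhds hy₁] with x hx using Set.indicator_of_mem hx g
  have hfar : (Set.Iic (1 / 2)).indicator g =ᶠ[𝓝 (1 - y)] 0 := by
    filter_upwards [Ioi_mem_nhds (by linarith : 1 / 2 < 1 - y)] with x hx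
      using Set.indicator_of_notMem (Set.notMem_Iic.2 hx) g
  have hsource := tendsto_intervalIntegral_cosKernel_sub_smul_of_le ⟨hy₀, by linarith⟩ hc hg
    (hgy.congr hnear.symm)
  have himage := tendsto_intervalIntegral_cosKernel_sub_smul_of_le
    (y := 1 - y) ⟨by linarith, by linarith⟩ hc hg (continuousAt_const.congr hfar.symm)
  -- Modulo 1, the mirror image `-y` is the point `1 - y` of `(1/2, 1)`.
  have hcoe (x : ℝ) : ((x - (1 - y) : ℝ) : UnitAddCircle) = (x + y : ℝ) := by
    rw [← AddCircle.coe_add_period, show x - (1 - y) + 1 = x + y by ring]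
  have hint {t : ℝ} (ht : 0 < t) (b : ℝ) : IntervalIntegrable
      (fun x ↦ cosKernel ((x + b : ℝ) : UnitAddCircle) t • g x) volume 0 (1 / 2) :=
    hg.continuousOn_smul ((continuous_cosKernel ht).comp (by fun_prop)).continuousOn
  simp only [hcoe] at himage
  have h := hsource.sub himage
  rw [hnear.self_of_nhds, hfar.self_of_nhds, Pi.zero_apply, sub_zero] at h
  refine h.congr' ?_
  filter_upwards [self_mem_nhdsWithin] with t ht
  simp only [imageKernel, sub_smul]
  rw [intervalIntegral.integral_sub (by simpa only [sub_eq_add_neg] using hint ht (-y)) (hint ht y)]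

end ThetaKernel

lemma f₁_eq_imageKernel {R t : ℝ} (hR : 0 < R) (ht : 0 < t) (y x : ℝ) :
    f₁ R (4 * R * y - R) (4 * R * x - R) t = (4 * R)⁻¹ * imageKernel y x (π * t / (8 * R ^ 2)) := by
  have hs : 0 < π * t / (8 * R ^ 2) := by positivity
  have h := ((HurwitzZeta.hasSum_nat_cosKernel₀ (x - y) hs).sub
    (HurwitzZeta.hasSum_nat_cosKernel₀ (x + y) hs)).mul_left (4 * R)⁻¹
  rw [sub_sub_sub_cancel_right] at h
  rw [f₁, imageKernel, ← h.tsum_eq]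
  refine tsum_congr fun k ↦ ?_
  have hangle (z : ℝ) : ((k : ℝ) + 1) * π * (4 * R * z - R + R) / (2 * R) =
      2 * π * z * (k + 1) := by
    field_simp
    ring
  have hexponent : -((((k : ℝ) + 1) * π) ^ 2 / (4 * R ^ 2)) * t / 2 =
      -π * ((k : ℝ) + 1) ^ 2 * (π * t / (8 * R ^ 2)) := by
    field_simp
    ring
  rw [hangle, hangle, hexponent, mul_sub (2 * π), sub_mul _ _ ((k : ℝ) + 1), mul_add (2 * π),
    add_mul _ _ ((k : ℝ) + 1), cos_sub, cos_add]
  field_simp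
  ring

lemma intervalIntegral_f₁_smul {E : Type*} [NormedAddCommGroup E] [NormedSpace ℝ E] {R t : ℝ}
    (hR : 0 < R) (ht : 0 < t) (y : ℝ) (φ : ℝ → E) :
    ∫ x in (-R)..R, f₁ R (4 * R * y - R) x t • φ x =
      ∫ x in 0..1 / 2, imageKernel y x (π * t / (8 * R ^ 2)) • φ (4 * R * x - R) := by
  have h := intervalIntegral.integral_comp_mul_sub (a := 0) (b := 1 / 2)
    (fun x ↦ f₁ R (4 * R * y - R) x t • φ x) (by positivity : 4 * R ≠ 0) R
  simp only [f₁_eq_imageKernel hR ht, mul_smul, intervalIntegral.integral_smul] at h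
  rw [mul_zero, zero_sub, show 4 * R * (1 / 2) - R = R by ring] at h
  exact (smul_right_injective E (by positivity : (4 * R)⁻¹ ≠ 0) h).symm

theorem f₁_initial_condition_general {E : Type*} [NormedAddCommGroup E] [NormedSpace ℝ E]
    [CompleteSpace E] {R x' : ℝ} (hx' : x' ∈ Set.Ioo (-R) R) {φ : ℝ → E}
    (hφ : IntervalIntegrable φ volume (-R) R) (hφx' : ContinuousAt φ x') :
    Tendsto (fun t ↦ ∫ x in (-R)..R, f₁ R x' x t • φ x) (𝓝[>] 0) (𝓝 (φ x')) := by
  have hR : 0 < R := neg_lt_self_iff.1 (hx'.1.trans hx'.2)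
  obtain ⟨y, rfl⟩ : ∃ y, x' = 4 * R * y - R := ⟨(x' + R) / (4 * R), by field_simp; ring⟩
  have hy : y ∈ Set.Ioo 0 (1 / 2) := ⟨by nlinarith [hx'.1], by nlinarith [hx'.2]⟩
  have hg : IntervalIntegrable (fun z ↦ φ (4 * R * z - R)) volume 0 (1 / 2) := by
    have h := (hφ.comp_sub_right R).comp_mul_left (c := 4 * R)
    rwa [neg_add_cancel, zero_div, show (R + R) / (4 * R) = 1 / 2 by field_simp; norm_num] at h
  have htime : Tendsto (fun t : ℝ ↦ π * t / (8 * R ^ 2)) (𝓝[>] 0) (𝓝[>] 0) := by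
    refine tendsto_nhdsWithin_iff.2 ⟨?_, ?_⟩
    · exact (Continuous.tendsto' (by fun_prop) 0 0 (by simp)).mono_left nhdsWithin_le_nhds
    · filter_upwards [self_mem_nhdsWithin] with t (ht : 0 < t)
      exact Set.mem_Ioi.2 (by positivity)
  have h := (tendsto_intervalIntegral_imageKernel_smul hy hg
    (hφx'.comp (f := fun z ↦ 4 * R * z - R) (by fun_prop))).comp htime
  refine h.congr' ?_
  filter_upwards [self_mem_nhdsWithin] with t ht using (intervalIntegral_f₁_smul hR ht y φ).symm

/-- As `t → 0⁺`, the Dirichlet heat kernel `f₁(·, t; x')` converges weakly to the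
Dirac delta at `x'`: for every continuous `φ` on `[-R, R]`,
`∫_{-R}^{R} f₁(x, t; x') φ(x) dx → φ(x')`. -/
theorem f₁_initial_condition (R : ℝ) (hR : 0 < R) (x' : ℝ)
    (hx' : x' ∈ Set.Ioo (-R) R) (φ : ℝ → ℝ)
    (hφ : ContinuousOn φ (Set.Icc (-R) R)) :
    Tendsto (fun t => ∫ x in (-R)..R, f₁ R x' x t * φ x) (𝓝[>] 0)
      (𝓝 (φ x')) :=
  f₁_initial_condition_general hx' (hφ.intervalIntegrable_of_Icc (neg_le_self hR.le))
    (hφ.continuousAt (Icc_mem_nhds hx'.1 hx'.2))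
end

section
/- For every R > 0, the total mass of the radial forward Kolmogorov solution in the 3-ball tends to one as t → 0⁺: lim_{t → 0⁺} ∫_0^R 4π r² · g(r, t) dr = 1. -/
/-!
Integrating the series term by term, every mode contributes `-2 cos(kπ) exp(-πk²s)` to the total
mass, where `s = πt / (2R²)`. The total mass is therefore `1 - θ(s)`, with
`θ(s) = ∑_{k ∈ ℤ} (-1)^k exp(-πk²s)` the Jacobi theta series, Mathlib's `cosKernel` at `1/2`.
Poisson summation turns `θ(s)` into `s^(-1/2)` times a Gaussian sum over `ℤ + 1/2`, which decays
exponentially as `s → 0⁺` because `ℤ + 1/2` avoids the origin.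
-/

open Real Filter Topology MeasureTheory

/-- Radially symmetric forward Kolmogorov solution for a standard 3-dimensional
Brownian motion started at the center of the ball of radius `R` and killed at its
boundary. -/
noncomputable def g (R r t : ℝ) : ℝ :=
  ∑' k : ℕ, (((k : ℝ) + 1) * π / (2 * π * R ^ 2 * r)) *
    Real.sin (((k : ℝ) + 1) * π * r / R) *
    Real.exp (-(((k : ℝ) + 1) ^ 2 * π ^ 2 * t) / (2 * R ^ 2))

open HurwitzZeta HurwitzKernelBounds

/-- The contribution of the `(k + 1)`-st Dirichlet mode of the ball of radius `R` to the radial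
density `4πr² g(R, r, t)`, in the rescaled time `s = πt / (2R²)`. The factor `r² / r` is cancelled
to `r`, so that the mode is continuous at the center. -/
noncomputable def radialMode (R s : ℝ) (k : ℕ) (r : ℝ) : ℝ :=
  2 * π / R ^ 2 * (((k : ℝ) + 1) * rexp (-π * (k + 1) ^ 2 * s)) *
    (r * Real.sin ((k + 1) * π / R * r))

theorem tendsto_cosKernel_nhdsGT_zero {a : UnitAddCircle} (ha : a ≠ 0) :
    Tendsto (cosKernel a) (𝓝[>] 0) (𝓝 0) := by
  obtain ⟨p, hp, h_decay⟩ := isBigO_atTop_evenKernel_sub a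
  simp only [if_neg ha, sub_zero] at h_decay
  have h_atTop : Tendsto (fun x : ℝ ↦ x ^ (1 / 2 : ℝ) * evenKernel a x) atTop (𝓝 0) :=
    ((Asymptotics.isBigO_refl (fun x : ℝ ↦ x ^ (1 / 2 : ℝ)) atTop).mul h_decay).trans_tendsto
      (tendsto_rpow_mul_exp_neg_mul_atTop_nhds_zero (1 / 2) p hp)
  refine (h_atTop.comp tendsto_inv_nhdsGT_zero).congr' ?_
  filter_upwards [self_mem_nhdsWithin] with s (hs : 0 < s)
  have h_rpow : s⁻¹ ^ (1 / 2 : ℝ) ≠ 0 := (rpow_pos_of_pos (inv_pos.2 hs) _).ne'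
  rw [Function.comp_apply, evenKernel_functional_equation, ← mul_assoc,
    mul_one_div_cancel h_rpow, one_mul, one_div, inv_inv]

theorem coe_one_half_ne_zero : ((1 / 2 : ℝ) : UnitAddCircle) ≠ 0 := by
  rw [Ne, AddCircle.coe_eq_zero_iff_of_mem_Ico (by norm_num)]
  norm_num

theorem hasSum_cosKernel_one_half {s : ℝ} (hs : 0 < s) :
    HasSum (fun k : ℕ ↦ 2 * (-1) ^ (k + 1) * rexp (-π * (k + 1) ^ 2 * s))
      (cosKernel ((1 / 2 : ℝ) : UnitAddCircle) s - 1) := by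
  refine (hasSum_nat_cosKernel₀ (1 / 2) hs).congr_fun fun k ↦ ?_
  rw [← Real.cos_nat_mul_pi]
  push_cast
  ring_nf

theorem integral_mul_sin_const_mul {c : ℝ} (hc : c ≠ 0) (a b : ℝ) :
    ∫ x in a..b, x * Real.sin (c * x) =
      (Real.sin (c * b) / c ^ 2 - b * Real.cos (c * b) / c) -
        (Real.sin (c * a) / c ^ 2 - a * Real.cos (c * a) / c) := by
  refine intervalIntegral.integral_eq_sub_of_hasDerivAt
    (f := fun x ↦ Real.sin (c * x) / c ^ 2 - x * Real.cos (c * x) / c) (fun x _ ↦ ?_)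
    (Continuous.intervalIntegrable (by fun_prop) _ _)
  have h_lin : HasDerivAt (fun x ↦ c * x) c x := by
    simpa using (hasDerivAt_id x).const_mul c
  refine ((h_lin.sin.div_const (c ^ 2)).sub
    (((hasDerivAt_id' x).mul h_lin.cos).div_const c)).congr_deriv ?_
  field_simp
  ring

theorem continuous_radialMode (R s : ℝ) (k : ℕ) : Continuous (radialMode R s k) := by
  unfold radialMode
  fun_prop

theorem norm_radialMode_le (R s : ℝ) (k : ℕ) (r : ℝ) :
    ‖radialMode R s k r‖ ≤ |r| * (2 * π / R ^ 2 * f_nat 1 1 s k) := by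
  have h_sin : ‖r * Real.sin ((k + 1) * π / R * r)‖ ≤ |r| := by
    rw [norm_mul, Real.norm_eq_abs]
    exact mul_le_of_le_one_right (abs_nonneg r) (abs_sin_le_one _)
  have h_coeff : 0 ≤ 2 * π / R ^ 2 * (((k : ℝ) + 1) * rexp (-π * (k + 1) ^ 2 * s)) := by
    positivity
  rw [radialMode, norm_mul, Real.norm_of_nonneg h_coeff, f_nat, pow_one, mul_comm |r|]
  exact mul_le_mul_of_nonneg_left h_sin h_coeff

theorem hasSum_integral_radialMode (R a b : ℝ) {s : ℝ} (hs : 0 < s) :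
    HasSum (fun k ↦ ∫ r in a..b, radialMode R s k r) (∫ r in a..b, ∑' k, radialMode R s k r) := by
  have h_bound : Summable fun k ↦ 2 * π / R ^ 2 * f_nat 1 1 s k :=
    (summable_f_nat 1 1 hs).mul_left _
  refine intervalIntegral.hasSum_integral_of_dominated_convergence
    (fun k r ↦ |r| * (2 * π / R ^ 2 * f_nat 1 1 s k))
    (fun k ↦ (continuous_radialMode R s k).aestronglyMeasurable)
    (fun k ↦ .of_forall fun r _ ↦ norm_radialMode_le R s k r)
    (.of_forall fun r _ ↦ h_bound.mul_left |r|) ?_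
    (.of_forall fun r _ ↦
      ((h_bound.mul_left |r|).of_norm_bounded fun k ↦ norm_radialMode_le R s k r).hasSum)
  simp only [tsum_mul_left]
  exact Continuous.intervalIntegrable (by fun_prop) _ _

theorem integral_radialMode {R : ℝ} (hR : R ≠ 0) (s : ℝ) (k : ℕ) :
    ∫ r in (0 : ℝ)..R, radialMode R s k r =
      -(2 * (-1) ^ (k + 1) * rexp (-π * (k + 1) ^ 2 * s)) := by
  have h_freq : ((k : ℝ) + 1) * π / R ≠ 0 := by positivity
  have h_boundary : ((k : ℝ) + 1) * π / R * R = (k + 1 : ℕ) * π := by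
    push_cast
    field_simp
  simp only [radialMode]
  rw [intervalIntegral.integral_const_mul, integral_mul_sin_const_mul h_freq, h_boundary,
    Real.sin_nat_mul_pi, Real.cos_nat_mul_pi]
  simp only [mul_zero, Real.sin_zero, zero_div, zero_mul, sub_zero, zero_sub]
  field_simp

theorem four_pi_mul_sq_mul_g_eq_tsum (R r t : ℝ) :
    4 * π * r ^ 2 * g R r t = ∑' k, radialMode R (π / (2 * R ^ 2) * t) k r := by
  rw [g, ← tsum_mul_left]
  refine tsum_congr fun k ↦ ?_
  have h_exp : -(((k : ℝ) + 1) ^ 2 * π ^ 2 * t) / (2 * R ^ 2) =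
      -π * (k + 1) ^ 2 * (π / (2 * R ^ 2) * t) := by ring
  have h_coeff : 4 * π * r ^ 2 * (((k : ℝ) + 1) * π / (2 * π * R ^ 2 * r)) =
      2 * π / R ^ 2 * (k + 1) * r := by
    field_simp
    ring
  rw [radialMode, h_exp, mul_div_right_comm _ r R, ← mul_assoc, ← mul_assoc, h_coeff]
  ring

theorem total_mass_eq_one_sub_cosKernel {R t : ℝ} (hR : R ≠ 0) (ht : 0 < t) :
    ∫ r in (0 : ℝ)..R, 4 * π * r ^ 2 * g R r t =
      1 - cosKernel ((1 / 2 : ℝ) : UnitAddCircle) (π / (2 * R ^ 2) * t) := by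
  have hs : 0 < π / (2 * R ^ 2) * t := by positivity
  have h_integral := hasSum_integral_radialMode R 0 R hs
  simp only [integral_radialMode hR, ← four_pi_mul_sq_mul_g_eq_tsum] at h_integral
  rw [h_integral.unique (hasSum_cosKernel_one_half hs).neg, neg_sub]

/-- The total mass of the radial forward Kolmogorov solution in the 3-ball tends to
one as `t → 0⁺`: `lim_{t → 0⁺} ∫_0^R 4πr² g(r, t) dr = 1`. -/
theorem g_total_mass_tendsto_one (R : ℝ) (hR : 0 < R) :
    Tendsto (fun t => ∫ r in (0 : ℝ)..R, 4 * π * r ^ 2 * g R r t) (𝓝[>] 0)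
      (𝓝 1) := by
  have h_time : Tendsto (fun t ↦ π / (2 * R ^ 2) * t) (𝓝[>] 0) (𝓝[>] 0) := by
    simpa only [mul_zero, id] using TendstoNhdsWithinIoi.const_mul (c := (0 : ℝ))
      (by positivity : 0 < π / (2 * R ^ 2)) tendsto_id
  have h_theta := (tendsto_cosKernel_nhdsGT_zero coe_one_half_ne_zero).comp h_time
  have h_mass := h_theta.const_sub 1
  rw [sub_zero] at h_mass
  refine h_mass.congr' ?_
  filter_upwards [self_mem_nhdsWithin] with t ht
  exact (total_mass_eq_one_sub_cosKernel hR.ne' ht).symm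
end
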